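/- The function g(θ) = exp(−1/(1+cos θ)²)·sin²(tan(θ/2)), extended by 0 at θ = π + 2kπ, is smooth (C^∞) on ℝ. -/

import Mathlib

open Real

open Classical in
noncomputable def g (θ : ℝ) : ℝ :=
  if ∃ k : ℤ, θ = π + 2 * π * k then 0
  else Real.exp (-(1 / (1 + Real.cos θ) ^ 2)) * Real.sin (Real.tan (θ / 2)) ^ 2

/-!
In the coordinate `t = tan (θ / 2)` one has `1 + cos θ = 2 / (1 + t²)`, so `g` is the function
`exp (-(1 + t²)² / 4) * sin² t`, which is Schwartz. A Schwartz function on the line, extended by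
zero at infinity, is smooth on the projective line: in the chart `x = 1 / t` differentiation becomes
the operator `-t² d/dt`, which preserves Schwartz functions, and rapid decay gives
`f (1 / x) = O(x²)`, so that the derivative at `x = 0` exists and vanishes.
-/

open scoped SchwartzMap ContDiff Nat

noncomputable section

section ProjectiveExtension

variable {F : Type*} [NormedAddCommGroup F] [NormedSpace ℝ F]

/-- The extension by zero at infinity of a Schwartz function to the real projective line, evaluated
at the point with homogeneous coordinates `[u : v]`, where `t : ℝ` is identified with `[t : 1]` and
`[1 : 0]` is the point at infinity. -/
def projExtend (f : 𝓢(ℝ, F)) (u v : ℝ) : F :=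
  if v = 0 then 0 else f (u / v)

@[simp]
theorem projExtend_zero_right (f : 𝓢(ℝ, F)) (u : ℝ) : projExtend f u 0 = 0 :=
  if_pos rfl

theorem projExtend_of_ne_zero (f : 𝓢(ℝ, F)) (u : ℝ) {v : ℝ} (hv : v ≠ 0) :
    projExtend f u v = f (u / v) :=
  if_neg hv

theorem projExtend_eq_projExtend_one_div (f : 𝓢(ℝ, F)) {u : ℝ} (hu : u ≠ 0) (v : ℝ) :
    projExtend f u v = projExtend f 1 (v / u) := by
  simp [projExtend, hu]

theorem norm_projExtend_one_le (f : 𝓢(ℝ, F)) (k : ℕ) (x : ℝ) :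
    ‖projExtend f 1 x‖ ≤ SchwartzMap.seminorm ℝ k 0 f * ‖x‖ ^ k := by
  rcases eq_or_ne x 0 with rfl | hx
  · rw [projExtend_zero_right, norm_zero]
    positivity
  · have hdecay := f.norm_pow_mul_le_seminorm ℝ k (1 / x)
    rwa [norm_div, norm_one, one_div, inv_pow, inv_mul_le_iff₀ (by positivity), mul_comm,
      ← projExtend_of_ne_zero f 1 hx] at hdecay

/-- The operator `f ↦ (t ↦ -t² • deriv f t)` on Schwartz functions, that is, differentiation with
respect to the coordinate `x = 1 / t` around infinity. -/
def derivAtInfty (f : 𝓢(ℝ, F)) : 𝓢(ℝ, F) :=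
  SchwartzMap.smulLeftCLM F (fun t : ℝ ↦ -t ^ 2) (SchwartzMap.derivCLM ℝ F f)

theorem derivAtInfty_apply (f : 𝓢(ℝ, F)) (t : ℝ) : derivAtInfty f t = (-t ^ 2) • deriv f t :=
  SchwartzMap.smulLeftCLM_apply_apply (by fun_prop) _ _

theorem hasDerivAt_projExtend_one (f : 𝓢(ℝ, F)) (x : ℝ) :
    HasDerivAt (projExtend f 1) (projExtend (derivAtInfty f) 1 x) x := by
  rcases eq_or_ne x 0 with rfl | hx
  · have hO : projExtend f 1 =O[nhds 0] fun x ↦ ‖x - 0‖ ^ 2 :=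
      .of_bound _ <| .of_forall fun x ↦ by
        simpa only [sub_zero, norm_pow, norm_norm] using norm_projExtend_one_le f 2 x
    simpa using (hO.hasFDerivAt (𝕜 := ℝ) one_lt_two).hasDerivAt
  · have hcomp : HasDerivAt (fun y ↦ f y⁻¹) ((-(x ^ 2)⁻¹) • deriv f x⁻¹) x :=
      (f.hasDerivAt x⁻¹).scomp x (hasDerivAt_inv hx)
    have heq : projExtend f 1 =ᶠ[nhds x] fun y ↦ f y⁻¹ := by
      filter_upwards [eventually_ne_nhds hx] with y hy
      rw [projExtend_of_ne_zero f 1 hy, one_div]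
    convert! hcomp.congr_of_eventuallyEq heq using 1
    rw [projExtend_of_ne_zero _ 1 hx, derivAtInfty_apply, one_div, inv_pow]

theorem contDiff_projExtend_one (f : 𝓢(ℝ, F)) : ContDiff ℝ ∞ (projExtend f 1) := by
  refine contDiff_infty.2 fun n ↦ ?_
  induction n generalizing f with
  | zero =>
    exact contDiff_zero.2 <| continuous_iff_continuousAt.2 fun x ↦
      (hasDerivAt_projExtend_one f x).continuousAt
  | succ n ih =>
    have hderiv : deriv (projExtend f 1) = projExtend (derivAtInfty f) 1 :=
      funext fun x ↦ (hasDerivAt_projExtend_one f x).deriv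
    rw [Nat.cast_succ, contDiff_succ_iff_deriv, hderiv]
    exact ⟨fun x ↦ (hasDerivAt_projExtend_one f x).differentiableAt, by simp, ih _⟩

variable {E : Type*} [NormedAddCommGroup E] [NormedSpace ℝ E] {u v : E → ℝ}

theorem contDiff_projExtend (f : 𝓢(ℝ, F)) (hu : ContDiff ℝ ∞ u) (hv : ContDiff ℝ ∞ v)
    (huv : ∀ x, u x ≠ 0 ∨ v x ≠ 0) : ContDiff ℝ ∞ fun x ↦ projExtend f (u x) (v x) := by
  refine contDiff_iff_contDiffAt.2 fun x ↦ ?_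
  rcases huv x with hux | hvx
  · have hchart : ContDiffAt ℝ ∞ (fun y ↦ projExtend f 1 (v y / u y)) x :=
      (contDiff_projExtend_one f).contDiffAt.comp x (hv.contDiffAt.div hu.contDiffAt hux)
    refine hchart.congr_of_eventuallyEq ?_
    filter_upwards [hu.continuous.continuousAt.eventually_ne hux] with y hy
    exact projExtend_eq_projExtend_one_div f hy (v y)
  · have hchart : ContDiffAt ℝ ∞ (fun y ↦ f (u y / v y)) x :=
      (f.smooth ⊤).contDiffAt.comp x (hu.contDiffAt.div hv.contDiffAt hvx)
    refine hchart.congr_of_eventuallyEq ?_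
    filter_upwards [hv.continuous.continuousAt.eventually_ne hvx] with y hy
    exact projExtend_of_ne_zero f (u y) hy

end ProjectiveExtension

section ExpNeg

variable {E : Type*} [NormedAddCommGroup E] [NormedSpace ℝ E] {q : E → ℝ} {c : ℝ}

theorem norm_iteratedFDeriv_exp (n : ℕ) (x : ℝ) : ‖iteratedFDeriv ℝ n exp x‖ = exp x := by
  rw [norm_iteratedFDeriv_eq_norm_iteratedDeriv, iteratedDeriv_eq_iterate, iter_deriv_exp,
    norm_of_nonneg (exp_pos x).le]

theorem exists_norm_iteratedFDeriv_exp_neg_le (hq : q.HasTemperateGrowth) (n : ℕ) :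
    ∃ (k : ℕ) (C : ℝ), 0 ≤ C ∧ ∀ x,
      ‖iteratedFDeriv ℝ n (fun y ↦ exp (-q y)) x‖ ≤ C * (1 + ‖x‖) ^ k * exp (-q x) := by
  obtain ⟨k, C, hC, hbound⟩ := hq.neg.norm_iteratedFDeriv_le_uniform n
  refine ⟨k * n, n ! * (1 + C) ^ n, by positivity, fun x ↦ ?_⟩
  have hderiv : ∀ i, 1 ≤ i → i ≤ n →
      ‖iteratedFDeriv ℝ i (-q) x‖ ≤ ((1 + C) * (1 + ‖x‖) ^ k) ^ i := fun i hi hin ↦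
    calc ‖iteratedFDeriv ℝ i (-q) x‖ ≤ C * (1 + ‖x‖) ^ k := hbound i hin x
      _ ≤ (1 + C) * (1 + ‖x‖) ^ k := by gcongr; simp
      _ ≤ ((1 + C) * (1 + ‖x‖) ^ k) ^ i := by
        have hone : 1 ≤ (1 + C) * (1 + ‖x‖) ^ k :=
          one_le_mul_of_one_le_of_one_le (by simpa) (one_le_pow₀ (by simp))
        exact le_self_pow₀ hone (by lia)
  calc ‖iteratedFDeriv ℝ n (exp ∘ (-q)) x‖
      ≤ n ! * exp (-q x) * ((1 + C) * (1 + ‖x‖) ^ k) ^ n :=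
        norm_iteratedFDeriv_comp_le contDiff_exp hq.neg.1 (mod_cast le_top) x
          (fun i _ ↦ (norm_iteratedFDeriv_exp i _).le) hderiv
    _ = n ! * (1 + C) ^ n * (1 + ‖x‖) ^ (k * n) * exp (-q x) := by
        rw [mul_pow, ← pow_mul]
        ring

theorem pow_mul_exp_neg_le_factorial {x : ℝ} (hx : 0 ≤ x) (n : ℕ) : x ^ n * exp (-x) ≤ n ! := by
  rw [exp_neg, ← div_eq_mul_inv, div_le_iff₀ (exp_pos x), mul_comm,
    ← div_le_iff₀ (by positivity)]
  exact pow_div_factorial_le_exp x hx n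

/-- The function `exp (-q)` as a Schwartz function, for `q` of temperate growth and at least linear
at infinity. -/
def expNegSchwartz (hq : q.HasTemperateGrowth) (hle : ∀ x, ‖x‖ ≤ q x + c) : 𝓢(E, ℝ) where
  toFun x := exp (-q x)
  smooth' := hq.1.neg.exp
  decay' k n := by
    obtain ⟨l, C, hC, hbound⟩ := exists_norm_iteratedFDeriv_exp_neg_le hq n
    refine ⟨C * ((k + l) ! * exp (1 + c)), fun x ↦ ?_⟩
    have hexp : exp (-q x) ≤ exp (-(1 + ‖x‖)) * exp (1 + c) := by
      rw [← exp_add, exp_le_exp]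
      linarith [hle x]
    calc ‖x‖ ^ k * ‖iteratedFDeriv ℝ n (fun y ↦ exp (-q y)) x‖
        ≤ (1 + ‖x‖) ^ k * (C * (1 + ‖x‖) ^ l * (exp (-(1 + ‖x‖)) * exp (1 + c))) := by
          gcongr
          · simp
          · exact (hbound x).trans (by gcongr)
      _ = C * ((1 + ‖x‖) ^ (k + l) * exp (-(1 + ‖x‖)) * exp (1 + c)) := by ring
      _ ≤ C * ((k + l) ! * exp (1 + c)) := by
          gcongr
          exact pow_mul_exp_neg_le_factorial (by positivity) _

@[simp]
theorem expNegSchwartz_apply (hq : q.HasTemperateGrowth) (hle : ∀ x, ‖x‖ ≤ q x + c) (x : E) :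
    expNegSchwartz hq hle x = exp (-q x) :=
  rfl

end ExpNeg

@[fun_prop]
theorem hasTemperateGrowth_sin : sin.HasTemperateGrowth :=
  ⟨contDiff_sin, fun n ↦ ⟨0, 1, fun x ↦ by
    simpa [norm_iteratedFDeriv_eq_norm_iteratedDeriv] using abs_iteratedDeriv_sin_le_one n x⟩⟩

theorem hasTemperateGrowth_one_add_sq_sq_div_four :
    (fun t : ℝ ↦ (1 + t ^ 2) ^ 2 / 4).HasTemperateGrowth := by
  simp only [div_eq_mul_inv]
  fun_prop

theorem norm_le_one_add_sq_sq_div_four_add_one (t : ℝ) : ‖t‖ ≤ (1 + t ^ 2) ^ 2 / 4 + 1 := by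
  rw [norm_eq_abs]
  nlinarith [sq_nonneg (t ^ 2 - 1), sq_nonneg (|t| - 1), sq_abs t]

/-- The function `g` in the coordinate `t = tan (θ / 2)`: the Schwartz function
`t ↦ exp (-(1 + t²)² / 4) * sin² t`. -/
def gTan : 𝓢(ℝ, ℝ) :=
  SchwartzMap.smulLeftCLM ℝ (fun t : ℝ ↦ sin t ^ 2)
    (expNegSchwartz hasTemperateGrowth_one_add_sq_sq_div_four
      norm_le_one_add_sq_sq_div_four_add_one)

theorem gTan_apply (t : ℝ) : gTan t = exp (-((1 + t ^ 2) ^ 2 / 4)) * sin t ^ 2 := by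
  rw [gTan, SchwartzMap.smulLeftCLM_apply_apply (by fun_prop), expNegSchwartz_apply, smul_eq_mul,
    mul_comm]

theorem cos_half_eq_zero_iff (θ : ℝ) : cos (θ / 2) = 0 ↔ ∃ k : ℤ, θ = π + 2 * π * k := by
  rw [cos_eq_zero_iff]
  exact exists_congr fun k ↦ ⟨fun h ↦ by linarith, fun h ↦ by linarith⟩

theorem one_div_one_add_cos {θ : ℝ} (h : cos (θ / 2) ≠ 0) :
    1 / (1 + cos θ) = (1 + tan (θ / 2) ^ 2) / 2 := by
  have hcos : 1 + cos θ = 2 * cos (θ / 2) ^ 2 := by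
    rw [cos_sq, mul_div_cancel₀ θ two_ne_zero]
    ring
  rw [hcos, ← inv_one_add_tan_sq h]
  field_simp

theorem g_eq_projExtend (θ : ℝ) : g θ = projExtend gTan (sin (θ / 2)) (cos (θ / 2)) := by
  by_cases h : cos (θ / 2) = 0
  · rw [g, if_pos ((cos_half_eq_zero_iff θ).1 h), h, projExtend_zero_right]
  · rw [g, if_neg (mt (cos_half_eq_zero_iff θ).2 h), projExtend_of_ne_zero _ _ h,
      ← tan_eq_sin_div_cos, gTan_apply, ← one_div_pow, one_div_one_add_cos h, div_pow,
      show (2 : ℝ) ^ 2 = 4 by norm_num]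

end

theorem stmt_3 : ContDiff ℝ (⊤ : ℕ∞) g := by
  rw [funext g_eq_projExtend]
  refine contDiff_projExtend gTan (by fun_prop) (by fun_prop) fun θ ↦ ?_
  by_contra! ⟨hsin, hcos⟩
  simpa [hsin, hcos] using sin_sq_add_cos_sq (θ / 2)
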